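/- arXiv:1907.09667 — 3 statements merged into one kernel-verified Lean document; each statement's English description precedes it below -/
import Mathlib

section
/- Let g ≥ 1 be an integer and let B be a complex g × g matrix whose real part Re B is negative definite as a quadratic form on ℝ^g. Then the function z ↦ θ(z,B) = Σ_{n ∈ ℤ^g} exp((1/2) n·Bn + n·z) is analytic (holomorphic) on all of ℂ^g; in particular the defining series converges uniformly on compact subsets of ℂ^g. -/
open Filter

/-- The general term of the Riemann theta series. -/
noncomputable def thetaTerm {g : ℕ} (B : Matrix (Fin g) (Fin g) ℂ)
    (n : Fin g → ℤ) (z : Fin g → ℂ) : ℂ :=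
  Complex.exp ((1 / 2) * (∑ i, ∑ j, (n i : ℂ) * B i j * (n j : ℂ))
    + ∑ i, (n i : ℂ) * z i)

/-- The Riemann theta function `θ(z, B) = Σ_{n ∈ ℤ^g} exp((1/2) n·Bn + n·z)`. -/
noncomputable def riemannTheta {g : ℕ} (B : Matrix (Fin g) (Fin g) ℂ)
    (z : Fin g → ℂ) : ℂ :=
  ∑' n : Fin g → ℤ, thetaTerm B n z

lemma aux_summable_int (a R : ℝ) (ha : 0 < a) :
    Summable fun m : ℤ => Real.exp (-a * (m : ℝ) ^ 2 + R * |(m : ℝ)|) := by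
  have h1 : Summable fun m : ℤ => Real.exp ((R + 1) ^ 2 / (4 * a)) * Real.exp (-|(m : ℝ)|) := by
    apply Summable.mul_left
    apply Summable.of_nat_of_neg
    · simpa using Real.summable_exp_neg_nat
    · simpa using Real.summable_exp_neg_nat
  refine Summable.of_nonneg_of_le (fun _ => (Real.exp_pos _).le) (fun m => ?_) h1
  rw [← Real.exp_add, Real.exp_le_exp, ← sq_abs (m : ℝ)]
  have : (R + 1) ^ 2 / (4 * a) + -|(m : ℝ)| - (-a * |(m : ℝ)| ^ 2 + R * |(m : ℝ)|)
      = (2 * a * |(m : ℝ)| - (R + 1)) ^ 2 / (4 * a) := by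
    field_simp
    ring
  have h2 : 0 ≤ (2 * a * |(m : ℝ)| - (R + 1)) ^ 2 / (4 * a) := by positivity
  linarith

lemma aux_summable_pi (f : ℤ → ℝ) (hf : Summable f) (h0 : ∀ m, 0 ≤ f m) (g : ℕ) :
    Summable fun n : Fin g → ℤ => ∏ i, f (n i) := by
  induction g with
  | zero => exact Summable.of_finite
  | succ k ih =>
    rw [← (Fin.consEquiv (fun _ : Fin (k + 1) => ℤ)).summable_iff]
    have := hf.mul_of_nonneg ih h0 (fun n => Finset.prod_nonneg fun i _ => h0 _)
    refine this.congr fun x => ?_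
    simp [Fin.consEquiv, Fin.prod_univ_succ]

lemma aux_summable (g : ℕ) (a R : ℝ) (ha : 0 < a) :
    Summable fun n : Fin g → ℤ =>
      Real.exp (-a * (∑ i, (n i : ℝ) ^ 2) + R * ∑ i, |(n i : ℝ)|) := by
  refine (aux_summable_pi _ (aux_summable_int a R ha) (fun _ => (Real.exp_pos _).le) g).congr
    fun n => ?_
  rw [← Real.exp_sum, Finset.sum_add_distrib, Finset.mul_sum, Finset.mul_sum]

lemma aux_analytic {ι E : Type*} [NormedAddCommGroup E] [NormedSpace ℂ E]
    (c : ι → ℂ) (L : ι → E →L[ℂ] ℂ) (h : Summable fun n => ‖c n‖ * Real.exp ‖L n‖) :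
    AnalyticAt ℂ (fun z => ∑' n, c n * Complex.exp (L n z)) 0 := by
  let q : ι → FormalMultilinearSeries ℂ E ℂ := fun n =>
    (NormedSpace.expSeries ℂ ℂ).compContinuousLinearMap (L n)
  have hq : ∀ n k, ‖q n k‖ ≤ ‖L n‖ ^ k / (k.factorial : ℝ) := fun n k => by
    refine (FormalMultilinearSeries.norm_compContinuousLinearMap_le _ _ _).trans ?_
    rw [div_eq_inv_mul]
    gcongr
    rw [NormedSpace.expSeries, norm_smul]
    simp
  have hb : ∀ n k, ‖c n • q n k‖ ≤ ‖c n‖ * Real.exp ‖L n‖ := fun n k => by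
    rw [norm_smul]
    gcongr
    exact (hq n k).trans (Real.pow_div_factorial_le_exp _ (norm_nonneg _) k)
  let p : FormalMultilinearSeries ℂ E ℂ := fun k => ∑' n, c n • q n k
  have hs : ∀ k, Summable fun n => c n • q n k := fun k =>
    Summable.of_norm_bounded h (fun n => hb n k)
  refine ⟨p, 1, ?_, zero_lt_one, ?_⟩
  · have := p.le_radius_of_bound (r := 1) (∑' n, ‖c n‖ * Real.exp ‖L n‖) (fun k => by
      simp only [NNReal.coe_one, one_pow, mul_one]
      exact tsum_of_norm_bounded h.hasSum (fun n => hb n k))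
    simpa using this
  · intro y hy
    have hy1 : ‖y‖ < 1 := by simpa [← ofReal_norm] using hy
    have hterm : ∀ n k, q n k (fun _ => y) = (L n y) ^ k / (k.factorial : ℂ) := fun n k => by
      exact NormedSpace.expSeries_apply_eq_div (𝕂 := ℂ) (L n y) k
    have hLy : ∀ n, ‖L n y‖ ≤ ‖L n‖ := fun n =>
      ((L n).le_opNorm y).trans (mul_le_of_le_one_right (norm_nonneg _) hy1.le)
    let F : ι × ℕ → ℂ := fun x => c x.1 * ((L x.1 y) ^ x.2 / (x.2.factorial : ℂ))
    have hexp : ∀ n, HasSum (fun k => F (n, k)) (c n * Complex.exp (L n y)) := fun n => by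
      have := (NormedSpace.expSeries_div_hasSum_exp (L n y)).mul_left (c n)
      rwa [← Complex.exp_eq_exp_ℂ] at this
    have hF : Summable F := by
      apply Summable.of_norm
      have hre : ∀ n, HasSum (fun k => ‖F (n, k)‖) (‖c n‖ * Real.exp ‖L n y‖) := fun n => by
        have := (NormedSpace.expSeries_div_hasSum_exp ‖L n y‖).mul_left ‖c n‖
        rw [← Real.exp_eq_exp_ℝ] at this
        simpa [F] using this
      rw [summable_prod_of_nonneg (fun _ => norm_nonneg _)]
      refine ⟨fun n => (hre n).summable, ?_⟩
      simp_rw [fun n => (hre n).tsum_eq]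
      refine Summable.of_nonneg_of_le (fun n => by positivity) (fun n => ?_) h
      gcongr
      exact hLy n
    have hpk : ∀ k, HasSum (fun n => F (n, k)) (p k (fun _ => y)) := fun k => by
      have h1 := (hs k).hasSum
      have h2 := h1.mapL (ContinuousMultilinearMap.apply ℂ (fun _ : Fin k => E) ℂ (fun _ => y))
      simpa [F, hterm] using h2
    have e1 := hF.hasSum.prod_fiberwise hexp
    have e2 := ((Equiv.prodComm ℕ ι).hasSum_iff.2 hF.hasSum).prod_fiberwise (fun k => hpk k)
    simp only [zero_add]
    rw [e1.tsum_eq]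
    exact e2

/-- The linear form `z ↦ n·z`. -/
noncomputable def auxL {g : ℕ} (n : Fin g → ℤ) : (Fin g → ℂ) →L[ℂ] ℂ :=
  ∑ i, (n i : ℂ) • ContinuousLinearMap.proj i

lemma auxL_apply {g : ℕ} (n : Fin g → ℤ) (z : Fin g → ℂ) :
    auxL n z = ∑ i, (n i : ℂ) * z i := by
  simp [auxL]

lemma auxL_bound {g : ℕ} (n : Fin g → ℤ) (z : Fin g → ℂ) :
    ‖auxL n z‖ ≤ (∑ i, |(n i : ℝ)|) * ‖z‖ := by
  rw [auxL_apply, Finset.sum_mul]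
  refine norm_sum_le_of_le _ fun i _ => ?_
  rw [norm_mul, Complex.norm_intCast]
  gcongr
  exact norm_le_pi_norm z i

lemma auxL_norm {g : ℕ} (n : Fin g → ℤ) : ‖auxL n‖ ≤ ∑ i, |(n i : ℝ)| :=
  ContinuousLinearMap.opNorm_le_bound _ (Finset.sum_nonneg fun _ _ => abs_nonneg _) (auxL_bound n)

lemma auxTerm_bound {g : ℕ} (B : Matrix (Fin g) (Fin g) ℂ) (c : ℝ)
    (hB : ∀ n : Fin g → ℝ,
      (∑ i, ∑ j, (B i j).re * n i * n j) ≤ -c * (∑ i, n i ^ 2))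
    (n : Fin g → ℤ) (z : Fin g → ℂ) (R : ℝ) (hz : ‖z‖ ≤ R) :
    ‖thetaTerm B n z‖ ≤
      Real.exp (-(c / 2) * (∑ i, (n i : ℝ) ^ 2) + R * ∑ i, |(n i : ℝ)|) := by
  rw [thetaTerm, Complex.norm_exp, Real.exp_le_exp, Complex.add_re]
  have h1 := hB (fun i => (n i : ℝ))
  have h2 : ((1 / 2 : ℂ) * (∑ i, ∑ j, (n i : ℂ) * B i j * (n j : ℂ))).re
      = 1 / 2 * ∑ i, ∑ j, (B i j).re * n i * n j := by
    have : (1 / 2 : ℂ) = ((1 / 2 : ℝ) : ℂ) := by push_cast; rfl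
    rw [this, Complex.re_ofReal_mul, Complex.re_sum]
    congr 1
    refine Finset.sum_congr rfl fun i _ => ?_
    rw [Complex.re_sum]
    refine Finset.sum_congr rfl fun j _ => ?_
    simp only [Complex.mul_re, Complex.mul_im, Complex.intCast_re, Complex.intCast_im]
    ring
  have h3 : (∑ i, (n i : ℂ) * z i).re ≤ R * ∑ i, |(n i : ℝ)| := by
    rw [← auxL_apply]
    refine (Complex.re_le_norm _).trans ((auxL_bound n z).trans ?_)
    rw [mul_comm]
    gcongr
  rw [h2]
  linarith

/-- If `g ≥ 1` and `B` is a complex `g × g` matrix whose real part is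
negative definite as a quadratic form on `ℝ^g`, then `z ↦ θ(z, B)` is analytic on all of
`ℂ^g`; in particular the defining series converges uniformly on compact subsets of `ℂ^g`. -/
theorem stmt_2 (g : ℕ) (hg : 1 ≤ g) (B : Matrix (Fin g) (Fin g) ℂ)
    (hB : ∃ c : ℝ, 0 < c ∧ ∀ n : Fin g → ℝ,
      (∑ i, ∑ j, (B i j).re * n i * n j) ≤ -c * (∑ i, n i ^ 2)) :
    AnalyticOnNhd ℂ (riemannTheta B) Set.univ ∧
      ∀ K : Set (Fin g → ℂ), IsCompact K →
        TendstoUniformlyOn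
          (fun (s : Finset (Fin g → ℤ)) (z : Fin g → ℂ) => ∑ n ∈ s, thetaTerm B n z)
          (riemannTheta B) atTop K := by
  obtain ⟨c, hc, hB⟩ := hB
  constructor
  · intro z₀ _
    have h := aux_analytic (fun n => thetaTerm B n z₀) (fun n => auxL n) (by
      refine Summable.of_nonneg_of_le (fun n => by positivity) (fun n => ?_)
        (aux_summable g (c / 2) (‖z₀‖ + 1) (by positivity))
      have h1 := auxTerm_bound B c hB n z₀ _ le_rfl
      have h2 := Real.exp_le_exp.2 (auxL_norm n)
      refine (mul_le_mul h1 h2 (Real.exp_pos _).le (Real.exp_pos _).le).trans_eq ?_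
      rw [← Real.exp_add]
      congr 1
      ring)
    have h' : AnalyticAt ℂ (fun z => z - z₀) z₀ := by fun_prop
    have h2 := AnalyticAt.comp_of_eq h h' (sub_self z₀)
    convert h2 using 1
    funext z
    simp only [riemannTheta, Function.comp]
    refine tsum_congr fun n => ?_
    rw [map_sub, auxL_apply, auxL_apply, thetaTerm, thetaTerm, ← Complex.exp_add]
    congr 1
    ring
  · intro K hK
    obtain ⟨R, hR⟩ := hK.isBounded.exists_norm_le
    exact tendstoUniformlyOn_tsum (aux_summable g (c / 2) R (by positivity))
      (fun n z hz => auxTerm_bound B c hB n z R (hR z hz))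
end

section
/- Fix an integer g ≥ 1 and real numbers 0 < κ₁ < κ₂ < ⋯ < κ_{2g}. Then there exists exactly one holomorphic function ξ : ℂ ∖ iΓ → ℂ such that ξ(k)⁴ = Π_{j=1}^{g} (k² + κ_{2j−1}²)/(k² + κ_{2j}²) for all k ∈ ℂ ∖ iΓ and ξ(k) → 1 as |k| → ∞. -/
open Filter

/-- The set `Γ = ⋃_{j=1}^{g} ([−κ_{2j}, −κ_{2j−1}] ∪ [κ_{2j−1}, κ_{2j}]) ⊂ ℝ`
(here indexed by `j ∈ {0, …, g-1}`, so the `j`-th piece uses `κ (2j+1)` and `κ (2j+2)`). -/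
def Gam (g : ℕ) (κ : ℕ → ℝ) : Set ℝ :=
  ⋃ j ∈ Finset.range g,
    (Set.Icc (-(κ (2 * j + 2))) (-(κ (2 * j + 1))) ∪
      Set.Icc (κ (2 * j + 1)) (κ (2 * j + 2)))

/-- The set `iΓ = {i k : k ∈ Γ} ⊂ ℂ`. -/
def iGam (g : ℕ) (κ : ℕ → ℝ) : Set ℂ :=
  (fun s : ℝ => Complex.I * (s : ℂ)) '' Gam g κ

/-- The defining properties of `ξ`: holomorphic on `ℂ ∖ iΓ`, a fourth root of
`Π_{j=1}^{g} (k² + κ_{2j−1}²)/(k² + κ_{2j}²)` there, and `ξ(k) → 1` as `|k| → ∞`. -/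
def XiProp (g : ℕ) (κ : ℕ → ℝ) (ξ : ℂ → ℂ) : Prop :=
  DifferentiableOn ℂ ξ (iGam g κ)ᶜ ∧
    (∀ k ∈ (iGam g κ)ᶜ,
      ξ k ^ 4 = ∏ j ∈ Finset.range g,
        (k ^ 2 + ((κ (2 * j + 1) : ℂ)) ^ 2) / (k ^ 2 + ((κ (2 * j + 2) : ℂ)) ^ 2)) ∧
    Tendsto ξ (Bornology.cobounded ℂ) (nhds 1)

lemma xi_kpos (g : ℕ) (κ : ℕ → ℝ) (h0 : 0 < κ 1)
    (hmono : ∀ i, 1 ≤ i → i + 1 ≤ 2 * g → κ i < κ (i + 1)) (i : ℕ) (hi : i + 1 ≤ 2 * g) :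
    0 < κ (i + 1) := by
  induction i with
  | zero => simpa using h0
  | succ n ih => exact (ih (by omega)).trans (hmono (n + 1) (by omega) hi)

lemma xi_slit (a b : ℝ) (ha : 0 < a) (hab : a < b) (k : ℂ)
    (hk : ∀ s : ℝ, k = Complex.I * s → ¬ (s ∈ Set.Icc (-b) (-a) ∪ Set.Icc a b)) :
    k ^ 2 + (b : ℂ) ^ 2 ≠ 0 ∧
      (k ^ 2 + (a : ℂ) ^ 2) / (k ^ 2 + (b : ℂ) ^ 2) ∈ Complex.slitPlane := by
  have key : ∀ r : ℝ, a ^ 2 ≤ r → r ≤ b ^ 2 → k ^ 2 ≠ -(r : ℂ) := by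
    intro r h1 h2 h
    have hr : 0 ≤ r := (sq_nonneg a).trans h1
    have hs : (Real.sqrt r) ^ 2 = r := Real.sq_sqrt hr
    have hsa : a ≤ Real.sqrt r := Real.le_sqrt_of_sq_le h1
    have hsb : Real.sqrt r ≤ b := Real.sqrt_le_iff.2 ⟨by linarith, h2⟩
    have h3 : k ^ 2 = (Complex.I * (Real.sqrt r : ℝ)) ^ 2 := by
      rw [h, mul_pow, Complex.I_sq, ← Complex.ofReal_pow, hs]; ring
    rcases sq_eq_sq_iff_eq_or_eq_neg.1 h3 with h4 | h4
    · exact hk _ h4 (Or.inr ⟨hsa, hsb⟩)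
    · exact hk (-Real.sqrt r) (by rw [h4]; push_cast; ring)
        (Or.inl ⟨by linarith, by linarith⟩)
  have hne : k ^ 2 + (b : ℂ) ^ 2 ≠ 0 := by
    intro h
    exact key (b ^ 2) (by nlinarith) le_rfl (by push_cast; linear_combination h)
  refine ⟨hne, ?_⟩
  rw [Complex.mem_slitPlane_iff_not_le_zero]
  intro hle
  obtain ⟨hre, him⟩ := Complex.le_def.1 hle
  set w := (k ^ 2 + (a : ℂ) ^ 2) / (k ^ 2 + (b : ℂ) ^ 2) with hw
  have hwe : w = ((w.re : ℝ) : ℂ) := by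
    apply Complex.ext <;> simp_all
  have h5 : k ^ 2 + (a : ℂ) ^ 2 = w * (k ^ 2 + (b : ℂ) ^ 2) := by
    rw [hw]; field_simp
  rw [hwe] at h5
  set x := w.re
  have hx : x ≤ 0 := by simpa using hre
  have hx1 : 0 < 1 - x := by linarith
  have hx1c : (1 - (x : ℂ)) ≠ 0 := by exact_mod_cast hx1.ne'
  apply key ((a ^ 2 - x * b ^ 2) / (1 - x))
  · rw [le_div_iff₀ hx1]; nlinarith [mul_nonneg (neg_nonneg.2 hx) (by nlinarith : 0 ≤ b ^ 2 - a ^ 2)]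
  · rw [div_le_iff₀ hx1]; nlinarith
  · push_cast
    field_simp
    linear_combination h5

lemma xi_slit' (g : ℕ) (κ : ℕ → ℝ) (h0 : 0 < κ 1)
    (hmono : ∀ i, 1 ≤ i → i + 1 ≤ 2 * g → κ i < κ (i + 1)) (k : ℂ) (hk : k ∈ (iGam g κ)ᶜ)
    (j : ℕ) (hj : j ∈ Finset.range g) :
    k ^ 2 + ((κ (2 * j + 2) : ℂ)) ^ 2 ≠ 0 ∧
    (k ^ 2 + ((κ (2 * j + 1) : ℂ)) ^ 2) / (k ^ 2 + ((κ (2 * j + 2) : ℂ)) ^ 2)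
      ∈ Complex.slitPlane := by
  have hj' := Finset.mem_range.1 hj
  apply xi_slit _ _ (xi_kpos g κ h0 hmono _ (by omega)) (hmono _ (by omega) (by omega))
  intro s hs hmem
  exact hk ⟨s, Set.mem_biUnion hj hmem, hs.symm⟩

lemma xi_tendsto (a b : ℂ) : Tendsto (fun k : ℂ => (k ^ 2 + a ^ 2) / (k ^ 2 + b ^ 2))
    (Bornology.cobounded ℂ) (nhds 1) := by
  have hi : Tendsto (fun k : ℂ => k⁻¹) (Bornology.cobounded ℂ) (nhds 0) :=
    tendsto_inv₀_cobounded
  have h : Tendsto (fun k : ℂ => (1 + a ^ 2 * k⁻¹ ^ 2) / (1 + b ^ 2 * k⁻¹ ^ 2))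
      (Bornology.cobounded ℂ) (nhds ((1 + a ^ 2 * 0 ^ 2) / (1 + b ^ 2 * 0 ^ 2))) := by
    apply Tendsto.div
    · exact ((hi.pow 2).const_mul _).const_add _
    · exact ((hi.pow 2).const_mul _).const_add _
    · simp
  have h' : Tendsto (fun k : ℂ => (1 + a ^ 2 * k⁻¹ ^ 2) / (1 + b ^ 2 * k⁻¹ ^ 2))
      (Bornology.cobounded ℂ) (nhds 1) := by simpa using h
  refine h'.congr' ?_
  filter_upwards [Bornology.eventually_ne_cobounded (0 : ℂ)] with k hk
  have e : ∀ c : ℂ, k ^ 2 + c ^ 2 = k ^ 2 * (1 + c ^ 2 * k⁻¹ ^ 2) := by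
    intro c; field_simp
  rw [e a, e b, mul_div_mul_left _ _ (pow_ne_zero 2 hk)]

lemma xi_exists (g : ℕ) (κ : ℕ → ℝ) (h0 : 0 < κ 1)
    (hmono : ∀ i, 1 ≤ i → i + 1 ≤ 2 * g → κ i < κ (i + 1)) :
    XiProp g κ (fun k => ∏ j ∈ Finset.range g,
      ((k ^ 2 + ((κ (2 * j + 1) : ℂ)) ^ 2) / (k ^ 2 + ((κ (2 * j + 2) : ℂ)) ^ 2)) ^ (1 / 4 : ℂ)) := by
  refine ⟨?_, ?_, ?_⟩
  · intro k hk
    apply DifferentiableAt.differentiableWithinAt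
    apply DifferentiableAt.fun_finsetProd
    intro j hj
    obtain ⟨h1, h2⟩ := xi_slit' g κ h0 hmono k hk j hj
    refine DifferentiableAt.cpow (f := fun x : ℂ => (x ^ 2 + ((κ (2 * j + 1) : ℂ)) ^ 2) / (x ^ 2 + ((κ (2 * j + 2) : ℂ)) ^ 2))
      (g := fun _ => (1 / 4 : ℂ)) ?_ (by fun_prop) h2
    fun_prop (disch := exact h1)
  · intro k hk
    simp only
    rw [← Finset.prod_pow]
    refine Finset.prod_congr rfl fun j _ => ?_
    rw [← Complex.cpow_nat_mul]
    norm_num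
  · have : (1 : ℂ) = ∏ j ∈ Finset.range g, (1 : ℂ) ^ (1 / 4 : ℂ) := by simp
    have h2 : nhds (1 : ℂ) = nhds (∏ j ∈ Finset.range g, (1 : ℂ) ^ (1 / 4 : ℂ)) := by rw [← this]
    rw [h2]
    apply tendsto_finsetProd
    intro j _
    exact (xi_tendsto _ _).cpow tendsto_const_nhds Complex.one_mem_slitPlane

lemma xi_ray (g : ℕ) (κ : ℕ → ℝ) (k : ℂ) (hk : k ∈ (iGam g κ)ᶜ) :
    ∃ σ : ℝ, σ ≠ 0 ∧ ∀ t : ℝ, 0 ≤ t → k + ((σ * t : ℝ) : ℂ) ∈ (iGam g κ)ᶜ := by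
  have aux : ∀ σ : ℝ, σ ≠ 0 → 0 ≤ σ * k.re →
      ∀ t : ℝ, 0 ≤ t → k + ((σ * t : ℝ) : ℂ) ∈ (iGam g κ)ᶜ := by
    rintro σ hσ h t ht ⟨s, hs, he⟩
    have hre := congrArg Complex.re he
    simp at hre
    have : σ ^ 2 * t ≤ 0 := by
      have e : σ ^ 2 * t = -(σ * k.re) := by linear_combination (-σ) * hre
      linarith
    have hσ2 : 0 < σ ^ 2 := by positivity
    have ht0 : t = 0 := by
      apply le_antisymm _ ht
      by_contra hc
      push Not at hc
      have := mul_pos hσ2 hc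
      linarith
    apply hk
    refine ⟨s, hs, ?_⟩
    simpa [ht0] using he
  rcases le_total 0 k.re with h | h
  · exact ⟨1, one_ne_zero, aux 1 one_ne_zero (by linarith)⟩
  · exact ⟨-1, by norm_num, aux (-1) (by norm_num) (by linarith)⟩

lemma xi_unique (g : ℕ) (κ : ℕ → ℝ) (h0 : 0 < κ 1)
    (hmono : ∀ i, 1 ≤ i → i + 1 ≤ 2 * g → κ i < κ (i + 1)) (ξ ξ' : ℂ → ℂ)
    (h : XiProp g κ ξ) (h' : XiProp g κ ξ') : Set.EqOn ξ' ξ (iGam g κ)ᶜ := by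
  intro k hk
  obtain ⟨σ, hσ, hray⟩ := xi_ray g κ k hk
  have hne : ∀ z ∈ (iGam g κ)ᶜ, ξ z ≠ 0 := by
    intro z hz hzero
    have := h.2.1 z hz
    rw [hzero, zero_pow (by norm_num)] at this
    refine Finset.prod_ne_zero_iff.2 (fun j hj => ?_) this.symm
    exact Complex.slitPlane_ne_zero (xi_slit' g κ h0 hmono z hz j hj).2
  let p : ℝ → ℂ := fun t => k + ((σ * t : ℝ) : ℂ)
  have hp : Continuous p := by fun_prop
  let f : ℝ → ℂ := fun t => ξ' (p t) / ξ (p t)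
  have hfc : ContinuousOn f (Set.Ici 0) := by
    apply ContinuousOn.div
    · exact h'.1.continuousOn.comp hp.continuousOn fun t ht => hray t ht
    · exact h.1.continuousOn.comp hp.continuousOn fun t ht => hray t ht
    · exact fun t ht => hne _ (hray t ht)
  have hfm : Set.MapsTo f (Set.Ici 0) (Polynomial.nthRootsFinset 4 (1 : ℂ) : Set ℂ) := by
    intro t ht
    have hz := hray t ht
    simp only [Finset.mem_coe]
    rw [Polynomial.mem_nthRootsFinset (by norm_num)]
    simp only [f]
    rw [div_pow, h'.2.1 _ hz, ← h.2.1 _ hz, div_self (pow_ne_zero 4 (hne _ hz))]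
  have hconst : ∀ t : ℝ, 0 ≤ t → f t = f 0 := fun t ht =>
    isPreconnected_Ici.constant_of_mapsTo (Finset.finite_toSet _).isDiscrete hfc hfm ht (Set.self_mem_Ici)
  have hpt : Tendsto p atTop (Bornology.cobounded ℂ) := by
    rw [← tendsto_norm_atTop_iff_cobounded]
    have h1 : Tendsto (fun t : ℝ => |σ| * t - ‖k‖) atTop atTop :=
      tendsto_atTop_add_const_right _ _ (tendsto_id.const_mul_atTop (abs_pos.2 hσ))
    refine tendsto_atTop_mono' _ ?_ h1
    filter_upwards [eventually_ge_atTop 0] with t ht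
    have h2 : ‖((σ * t : ℝ) : ℂ)‖ = |σ| * t := by
      rw [Complex.norm_real, Real.norm_eq_abs, abs_mul, abs_of_nonneg ht]
    have h3 : ‖((σ * t : ℝ) : ℂ)‖ ≤ ‖p t‖ + ‖k‖ := by
      have : ((σ * t : ℝ) : ℂ) = p t - k := by simp [p]
      rw [this]; exact norm_sub_le _ _
    linarith
  have hf1 : Tendsto f atTop (nhds 1) := by
    have := (h'.2.2.comp hpt).div (h.2.2.comp hpt) one_ne_zero
    rw [div_one] at this
    exact this
  have hf2 : Tendsto f atTop (nhds (f 0)) := by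
    refine tendsto_const_nhds.congr' ?_
    filter_upwards [eventually_ge_atTop 0] with t ht
    exact (hconst t ht).symm
  have hf0 : f 0 = 1 := tendsto_nhds_unique hf2 hf1
  have : ξ' k / ξ k = 1 := by simpa [f, p] using hf0
  exact (div_eq_one_iff_eq (hne k hk)).1 this

/-- For `0 < κ₁ < ⋯ < κ_{2g}` there is exactly one holomorphic function
`ξ : ℂ ∖ iΓ → ℂ` with `ξ(k)⁴ = Π_{j=1}^{g} (k² + κ_{2j−1}²)/(k² + κ_{2j}²)` on `ℂ ∖ iΓ`
and `ξ(k) → 1` as `|k| → ∞` (uniqueness as functions on `ℂ ∖ iΓ`). -/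
theorem stmt_3 (g : ℕ) (hg : 1 ≤ g) (κ : ℕ → ℝ) (h0 : 0 < κ 1)
    (hmono : ∀ i, 1 ≤ i → i + 1 ≤ 2 * g → κ i < κ (i + 1)) :
    ∃ ξ : ℂ → ℂ, XiProp g κ ξ ∧
      ∀ ξ' : ℂ → ℂ, XiProp g κ ξ' → Set.EqOn ξ' ξ (iGam g κ)ᶜ := by
  exact ⟨_, xi_exists g κ h0 hmono, fun ξ' h' =>
    xi_unique g κ h0 hmono _ ξ' (xi_exists g κ h0 hmono) h'⟩
end

section
/- Fix an integer g ≥ 1 and real numbers 0 < κ₁ < κ₂ < ⋯ < κ_{2g}, and let ξ : ℂ ∖ iΓ → ℂ be the unique holomorphic function with ξ(k)⁴ = Π_{j=1}^{g} (k² + κ_{2j−1}²)/(k² + κ_{2j}²) on ℂ ∖ iΓ and ξ(k) → 1 as |k| → ∞. Then for every p ∈ Γ with p not an endpoint of one of the intervals composing Γ, the one-sided boundary values ξ₊(ip) := lim_{ε→0⁺} ξ(ip + ε) and ξ₋(ip) := lim_{ε→0⁺} ξ(ip − ε) exist and are nonzero, and they satisfy the jump relations ξ₊(ip) = i·sgn(p)·ξ₊(−ip)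 and ξ₋(ip) = −i·sgn(p)·ξ₋(−ip). -/
open Filter Topology

noncomputable def fF (a b : ℝ) (k : ℂ) : ℂ := (k ^ 2 + (a : ℂ) ^ 2) / (k ^ 2 + (b : ℂ) ^ 2)

lemma ne_of_re_pos (b : ℝ) (k : ℂ) (hk : 0 < k.re) : k ^ 2 + (b : ℂ) ^ 2 ≠ 0 := by
  intro h
  have h1 := congrArg Complex.re h
  have h2 := congrArg Complex.im h
  simp [pow_two] at h1 h2
  have h3 : k.im = 0 := by
    have : k.re * k.im = 0 := by linarith
    rcases mul_eq_zero.1 this with h | h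
    · linarith
    · exact h
  rw [h3] at h1
  nlinarith

lemma fF_im (a b : ℝ) (k : ℂ) :
    (fF a b k).im = 2 * k.re * k.im * (b ^ 2 - a ^ 2) / Complex.normSq (k ^ 2 + (b : ℂ) ^ 2) := by
  unfold fF
  rw [Complex.div_im]
  simp [pow_two]
  ring

lemma fF_slit (a b : ℝ) (hab : a ^ 2 < b ^ 2) (k : ℂ) (hk : 0 < k.re) :
    fF a b k ∈ Complex.slitPlane := by
  have hb := ne_of_re_pos b k hk
  have hn : 0 < Complex.normSq (k ^ 2 + (b : ℂ) ^ 2) := Complex.normSq_pos.2 hb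
  rw [Complex.mem_slitPlane_iff]
  by_cases h : k.im = 0
  · left
    have e : fF a b k = (((k.re ^ 2 + a ^ 2) / (k.re ^ 2 + b ^ 2) : ℝ) : ℂ) := by
      have hk' : k = (k.re : ℂ) := Complex.ext (by simp) (by simpa using h)
      unfold fF
      rw [hk']
      simp
    rw [e, Complex.ofReal_re]
    positivity
  · right
    rw [fF_im]
    have h' : b ^ 2 - a ^ 2 ≠ 0 := by linarith
    exact div_ne_zero (mul_ne_zero (mul_ne_zero (mul_ne_zero two_ne_zero hk.ne') h) h') hn.ne'

lemma fF_cont (a b : ℝ) (k : ℂ) (hk : k ^ 2 + (b : ℂ) ^ 2 ≠ 0) : ContinuousAt (fF a b) k := by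
  unfold fF
  fun_prop (disch := assumption)

lemma fF_tend (a b q : ℝ) (σ : ℝ) (hσ : σ ^ 2 = 1) (hq : q ^ 2 ≠ b ^ 2) :
    Tendsto (fun ε : ℝ => fF a b (Complex.I * ((σ * q : ℝ) : ℂ) + (ε : ℂ))) (𝓝[>] 0)
      (𝓝 (((a ^ 2 - q ^ 2) / (b ^ 2 - q ^ 2) : ℝ) : ℂ)) := by
  have hσ' : (σ : ℂ) ^ 2 = 1 := by exact_mod_cast hσ
  have e : (Complex.I * ((σ * q : ℝ) : ℂ)) ^ 2 = -(q : ℂ) ^ 2 := by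
    push_cast
    rw [mul_pow, mul_pow, Complex.I_sq, hσ']; ring
  have hne : (Complex.I * ((σ * q : ℝ) : ℂ)) ^ 2 + (b : ℂ) ^ 2 ≠ 0 := by
    rw [e]
    intro h
    apply hq
    have : (q : ℂ) ^ 2 = (b : ℂ) ^ 2 := by linear_combination -h
    exact_mod_cast this
  have h1 := fF_cont a b _ hne
  have h2 : fF a b (Complex.I * ((σ * q : ℝ) : ℂ)) =
      (((a ^ 2 - q ^ 2) / (b ^ 2 - q ^ 2) : ℝ) : ℂ) := by
    unfold fF
    rw [e]; push_cast; congr 1 <;> ring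
  rw [← h2]
  refine h1.tendsto.comp ?_
  have : Continuous (fun ε : ℝ => Complex.I * ((σ * q : ℝ) : ℂ) + (ε : ℂ)) := by fun_prop
  have := this.tendsto 0
  simp only [Complex.ofReal_zero, add_zero] at this
  exact this.mono_left nhdsWithin_le_nhds

lemma log_tend_pos (a b q : ℝ) (σ : ℝ) (hσ : σ ^ 2 = 1) (hq : q ^ 2 ≠ b ^ 2)
    (hx : 0 < (a ^ 2 - q ^ 2) / (b ^ 2 - q ^ 2)) :
    Tendsto (fun ε : ℝ => Complex.log (fF a b (Complex.I * ((σ * q : ℝ) : ℂ) + (ε : ℂ)))) (𝓝[>] 0)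
      (𝓝 (Complex.log (((a ^ 2 - q ^ 2) / (b ^ 2 - q ^ 2) : ℝ) : ℂ))) :=
  (fF_tend a b q σ hσ hq).clog (Complex.ofReal_mem_slitPlane.2 hx)

lemma log_tend_neg_up (a b q : ℝ) (hq0 : 0 < q) (hab : a ^ 2 < b ^ 2) (hq : q ^ 2 ≠ b ^ 2)
    (hx : (a ^ 2 - q ^ 2) / (b ^ 2 - q ^ 2) < 0) :
    Tendsto (fun ε : ℝ => Complex.log (fF a b (Complex.I * ((1 * q : ℝ) : ℂ) + (ε : ℂ)))) (𝓝[>] 0)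
      (𝓝 ((Real.log ‖(((a ^ 2 - q ^ 2) / (b ^ 2 - q ^ 2) : ℝ) : ℂ)‖ : ℂ) + Real.pi * Complex.I)) := by
  have h := Complex.continuousWithinAt_log_of_re_neg_of_im_zero
    (z := (((a ^ 2 - q ^ 2) / (b ^ 2 - q ^ 2) : ℝ) : ℂ)) (by rw [Complex.ofReal_re]; exact hx) (Complex.ofReal_im _)
  have h' := h.tendsto
  have e : Complex.log (((a ^ 2 - q ^ 2) / (b ^ 2 - q ^ 2) : ℝ) : ℂ) =
     (Real.log ‖(((a ^ 2 - q ^ 2) / (b ^ 2 - q ^ 2) : ℝ) : ℂ)‖ : ℂ) + Real.pi * Complex.I := by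
    rw [Complex.log, Complex.arg_ofReal_of_neg hx]
  rw [e] at h'
  refine h'.comp (tendsto_nhdsWithin_iff.2 ⟨fF_tend a b q 1 (by norm_num) hq, ?_⟩)
  filter_upwards [self_mem_nhdsWithin] with ε hε
  have hε : 0 < ε := hε
  show 0 ≤ (fF a b _).im
  rw [fF_im]
  have : 0 < b ^ 2 - a ^ 2 := by linarith
  refine div_nonneg ?_ (Complex.normSq_nonneg _)
  simp
  positivity

lemma log_tend_neg_down (a b q : ℝ) (hq0 : 0 < q) (hab : a ^ 2 < b ^ 2) (hq : q ^ 2 ≠ b ^ 2)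
    (hx : (a ^ 2 - q ^ 2) / (b ^ 2 - q ^ 2) < 0) :
    Tendsto (fun ε : ℝ => Complex.log (fF a b (Complex.I * ((-1 * q : ℝ) : ℂ) + (ε : ℂ)))) (𝓝[>] 0)
      (𝓝 ((Real.log ‖(((a ^ 2 - q ^ 2) / (b ^ 2 - q ^ 2) : ℝ) : ℂ)‖ : ℂ) - Real.pi * Complex.I)) := by
  have h' := Complex.tendsto_log_nhdsWithin_im_neg_of_re_neg_of_im_zero
    (z := (((a ^ 2 - q ^ 2) / (b ^ 2 - q ^ 2) : ℝ) : ℂ)) (by rw [Complex.ofReal_re]; exact hx) (Complex.ofReal_im _)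
  refine h'.comp (tendsto_nhdsWithin_iff.2 ⟨fF_tend a b q (-1) (by norm_num) hq, ?_⟩)
  filter_upwards [self_mem_nhdsWithin] with ε hε
  have hε : 0 < ε := hε
  have hd : 0 < b ^ 2 - a ^ 2 := by linarith
  show (fF a b _).im < 0
  rw [fF_im]
  refine div_neg_of_neg_of_pos ?_ (Complex.normSq_pos.2 (ne_of_re_pos _ _ (by simpa using hε)))
  simp
  positivity

noncomputable def LL (g : ℕ) (κ : ℕ → ℝ) (k : ℂ) : ℂ :=
  ∑ j ∈ Finset.range g, Complex.log (fF (κ (2 * j + 1)) (κ (2 * j + 2)) k)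

lemma kap_lt (g : ℕ) (κ : ℕ → ℝ) (hmono : ∀ i, 1 ≤ i → i + 1 ≤ 2 * g → κ i < κ (i + 1))
    (i j : ℕ) (hi : 1 ≤ i) (hij : i < j) (hj : j ≤ 2 * g) : κ i < κ j := by
  induction j, hij using Nat.le_induction with
  | base => exact hmono i hi hj
  | succ m hm ih => exact (ih (by omega)).trans (hmono m (by omega) hj)

lemma kap_pos (g : ℕ) (κ : ℕ → ℝ) (h0 : 0 < κ 1)
    (hmono : ∀ i, 1 ≤ i → i + 1 ≤ 2 * g → κ i < κ (i + 1))
    (i : ℕ) (hi : 1 ≤ i) (hj : i ≤ 2 * g) : 0 < κ i := by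
  rcases hi.eq_or_lt with h | h
  · rw [← h]; exact h0
  · exact h0.trans (kap_lt g κ hmono 1 i le_rfl h hj)

lemma LL_tend (g : ℕ) (κ : ℕ → ℝ) (h0 : 0 < κ 1)
    (hmono : ∀ i, 1 ≤ i → i + 1 ≤ 2 * g → κ i < κ (i + 1)) (j : ℕ) (hj : j < g) (q : ℝ)
    (h1 : κ (2 * j + 1) < q) (h2 : q < κ (2 * j + 2)) :
    ∃ S : ℂ, Tendsto (fun ε : ℝ => LL g κ (Complex.I * (q : ℂ) + (ε : ℂ))) (𝓝[>] 0)
        (𝓝 (S + Real.pi * Complex.I)) ∧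
      Tendsto (fun ε : ℝ => LL g κ (-(Complex.I * (q : ℂ)) + (ε : ℂ))) (𝓝[>] 0)
        (𝓝 (S - Real.pi * Complex.I)) := by
  have hpos := kap_pos g κ h0 hmono
  have hlt := kap_lt g κ hmono
  have hq0 : 0 < q := (hpos (2 * j + 1) (by omega) (by omega)).trans h1
  have key : ∀ l ∈ Finset.range g, ∃ S : ℂ,
      Tendsto (fun ε : ℝ => Complex.log (fF (κ (2 * l + 1)) (κ (2 * l + 2))
        (Complex.I * ((1 * q : ℝ) : ℂ) + (ε : ℂ)))) (𝓝[>] 0)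
        (𝓝 (S + if l = j then Real.pi * Complex.I else 0)) ∧
      Tendsto (fun ε : ℝ => Complex.log (fF (κ (2 * l + 1)) (κ (2 * l + 2))
        (Complex.I * ((-1 * q : ℝ) : ℂ) + (ε : ℂ)))) (𝓝[>] 0)
        (𝓝 (S - if l = j then Real.pi * Complex.I else 0)) := by
    intro l hl
    rw [Finset.mem_range] at hl
    have ha := hpos (2 * l + 1) (by omega) (by omega)
    have hb := hlt (2 * l + 1) (2 * l + 2) (by omega) (by omega) (by omega)
    have hab : κ (2 * l + 1) ^ 2 < κ (2 * l + 2) ^ 2 := by gcongr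
    by_cases hlj : l = j
    · subst hlj
      have u1 : κ (2 * l + 1) ^ 2 < q ^ 2 := by gcongr
      have u2 : q ^ 2 < κ (2 * l + 2) ^ 2 := by gcongr
      have hx : (κ (2 * l + 1) ^ 2 - q ^ 2) / (κ (2 * l + 2) ^ 2 - q ^ 2) < 0 :=
        div_neg_of_neg_of_pos (by linarith) (by linarith)
      simp only [if_true]
      exact ⟨_, log_tend_neg_up _ _ q hq0 hab u2.ne hx, log_tend_neg_down _ _ q hq0 hab u2.ne hx⟩
    · simp only [hlj, if_false, add_zero, sub_zero]
      have : q ^ 2 ≠ κ (2 * l + 2) ^ 2 ∧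
          0 < (κ (2 * l + 1) ^ 2 - q ^ 2) / (κ (2 * l + 2) ^ 2 - q ^ 2) := by
        rcases lt_or_gt_of_ne hlj with h | h
        · have u : κ (2 * l + 2) < κ (2 * j + 1) := hlt _ _ (by omega) (by omega) (by omega)
          have u3 : κ (2 * l + 2) ^ 2 < q ^ 2 := by
            have : κ (2 * l + 2) < q := by linarith
            have : 0 < κ (2 * l + 2) := by linarith
            gcongr
          exact ⟨u3.ne', div_pos_of_neg_of_neg (by linarith) (by linarith)⟩
        · have u : κ (2 * j + 2) < κ (2 * l + 1) := hlt _ _ (by omega) (by omega) (by omega)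
          have u3 : q ^ 2 < κ (2 * l + 1) ^ 2 := by
            have : q < κ (2 * l + 1) := by linarith
            gcongr
          exact ⟨by linarith, div_pos (by linarith) (by linarith)⟩
      exact ⟨_, log_tend_pos _ _ q 1 (by norm_num) this.1 this.2,
        log_tend_pos _ _ q (-1) (by norm_num) this.1 this.2⟩
  choose! S hS1 hS2 using key
  refine ⟨∑ l ∈ Finset.range g, S l, ?_, ?_⟩
  · have := tendsto_finsetSum _ hS1
    rw [Finset.sum_add_distrib, Finset.sum_ite_eq' ] at this
    simp only [Finset.mem_range, hj, if_true, one_mul] at this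
    exact this
  · have := tendsto_finsetSum _ hS2
    rw [Finset.sum_sub_distrib, Finset.sum_ite_eq' ] at this
    simp only [Finset.mem_range, hj, if_true, neg_mul, one_mul, Complex.ofReal_neg, mul_neg] at this
    exact this

lemma fF_inf (a b : ℝ) : Tendsto (fun t : ℝ => fF a b (t : ℂ)) atTop (𝓝 1) := by
  have h : Tendsto (fun t : ℝ => 1 + (a ^ 2 - b ^ 2) / (t ^ 2 + b ^ 2)) atTop (𝓝 (1 + 0)) := by
    refine tendsto_const_nhds.add (tendsto_const_nhds.div_atTop ?_)
    exact tendsto_atTop_add_const_right _ _ (tendsto_pow_atTop (by norm_num))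
  rw [add_zero] at h
  have h2 := (Complex.continuous_ofReal.tendsto _).comp h
  rw [Complex.ofReal_one] at h2
  refine h2.congr' ?_
  filter_upwards [eventually_gt_atTop 0] with t ht
  have := ne_of_re_pos b (t : ℂ) (by simpa using ht)
  simp only [Function.comp, fF]
  push_cast
  field_simp
  ring

lemma unique_half (g : ℕ) (κ : ℕ → ℝ) (h0 : 0 < κ 1)
    (hmono : ∀ i, 1 ≤ i → i + 1 ≤ 2 * g → κ i < κ (i + 1)) (η : ℂ → ℂ)
    (hc : ContinuousOn η {k | 0 < k.re})
    (h4 : ∀ k : ℂ, 0 < k.re → η k ^ 4 =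
      ∏ j ∈ Finset.range g, fF (κ (2 * j + 1)) (κ (2 * j + 2)) k)
    (hinf : Tendsto (fun t : ℝ => η (t : ℂ)) atTop (𝓝 1)) (k : ℂ) (hk : 0 < k.re) :
    η k = Complex.exp (LL g κ k / 4) := by
  have hslit : ∀ j ∈ Finset.range g, ∀ k : ℂ, 0 < k.re →
      fF (κ (2 * j + 1)) (κ (2 * j + 2)) k ∈ Complex.slitPlane := by
    intro l hl k hk
    rw [Finset.mem_range] at hl
    have ha := kap_pos g κ h0 hmono (2 * l + 1) (by omega) (by omega)
    have hb := kap_lt g κ hmono (2 * l + 1) (2 * l + 2) (by omega) (by omega) (by omega)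
    exact fF_slit _ _ (by gcongr) k hk
  have hLc : ContinuousOn (LL g κ) {k | 0 < k.re} := by
    unfold LL
    refine continuousOn_finsetSum _ fun j hj => ?_
    intro z hz
    exact ((fF_cont _ _ z (ne_of_re_pos _ z hz)).clog (hslit j hj z hz)).continuousWithinAt
  have hexp : ∀ k : ℂ, 0 < k.re → Complex.exp (LL g κ k) =
      ∏ j ∈ Finset.range g, fF (κ (2 * j + 1)) (κ (2 * j + 2)) k := by
    intro k hk
    unfold LL
    rw [Complex.exp_sum]
    exact Finset.prod_congr rfl fun j hj =>
      Complex.exp_log (Complex.slitPlane_ne_zero (hslit j hj k hk))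
  let h : ℂ → ℂ := fun k => η k * Complex.exp (-(LL g κ k / 4))
  have hhc : ContinuousOn h {k | 0 < k.re} := by
    refine hc.mul (Complex.continuous_exp.comp_continuousOn ?_)
    exact (hLc.div_const 4).neg
  have hh4 : ∀ k : ℂ, 0 < k.re → h k ^ 4 = 1 := by
    intro k hk
    simp only [h]
    rw [mul_pow, h4 k hk, ← hexp k hk, ← Complex.exp_nat_mul, ← Complex.exp_add]
    rw [show LL g κ k + ((4 : ℕ) : ℂ) * -(LL g κ k / 4) = 0 by push_cast; ring, Complex.exp_zero]
  have hfin : Set.Finite {z : ℂ | z ^ 4 = 1} := by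
    have : {z : ℂ | z ^ 4 = 1} ⊆ ((Polynomial.nthRoots 4 (1 : ℂ)).toFinset : Set ℂ) := by
      intro z hz
      simpa [Polynomial.mem_nthRoots] using hz
    exact (Finset.finite_toSet _).subset this
  have hpre : IsPreconnected {k : ℂ | 0 < k.re} := (convex_halfSpace_re_gt 0).isPreconnected
  have hLinf : Tendsto (fun t : ℝ => LL g κ (t : ℂ)) atTop (𝓝 0) := by
    have : Tendsto (fun t : ℝ => LL g κ (t : ℂ)) atTop (𝓝 (∑ j ∈ Finset.range g, Complex.log 1)) :=
      tendsto_finsetSum _ fun j _ => (fF_inf _ _).clog Complex.one_mem_slitPlane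
    simpa using this
  have hhinf : Tendsto (fun t : ℝ => h (t : ℂ)) atTop (𝓝 1) := by
    have e := (Complex.continuous_exp.tendsto _).comp (hLinf.div_const 4).neg
    have := hinf.mul e
    simpa [h] using this
  have hconst : ∀ t : ℝ, 0 < t → h (t : ℂ) = h k := fun t ht =>
    hpre.constant_of_mapsTo (T := {z : ℂ | z ^ 4 = 1}) hfin.isDiscrete hhc
      (fun z hz => hh4 z hz) (by simpa using ht) hk
  have hk1 : h k = 1 := by
    refine tendsto_nhds_unique (tendsto_const_nhds.congr' ?_) hhinf
    filter_upwards [eventually_gt_atTop 0] with t ht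
    exact (hconst t ht).symm
  have : η k * Complex.exp (-(LL g κ k / 4)) = 1 := hk1
  rw [Complex.exp_neg] at this
  exact (mul_inv_eq_one₀ (Complex.exp_ne_zero _)).1 this

lemma not_mem_iGam (g : ℕ) (κ : ℕ → ℝ) (k : ℂ) (hk : k.re ≠ 0) : k ∈ (iGam g κ)ᶜ := by
  rintro ⟨s, -, rfl⟩
  simp at hk

lemma main_pos (g : ℕ) (κ : ℕ → ℝ) (h0 : 0 < κ 1)
    (hmono : ∀ i, 1 ≤ i → i + 1 ≤ 2 * g → κ i < κ (i + 1))
    (ξ : ℂ → ℂ) (hξ : XiProp g κ ξ) (j : ℕ) (hj : j < g) (q : ℝ)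
    (h1 : κ (2 * j + 1) < q) (h2 : q < κ (2 * j + 2)) :
    ∃ A B : ℂ,
        Tendsto (fun ε : ℝ => ξ (Complex.I * (q : ℂ) + (ε : ℂ))) (𝓝[>] 0) (𝓝 A) ∧
        Tendsto (fun ε : ℝ => ξ (Complex.I * (q : ℂ) - (ε : ℂ))) (𝓝[>] 0) (𝓝 B) ∧
        Tendsto (fun ε : ℝ => ξ (-(Complex.I * (q : ℂ)) + (ε : ℂ))) (𝓝[>] 0) (𝓝 B) ∧
        Tendsto (fun ε : ℝ => ξ (-(Complex.I * (q : ℂ)) - (ε : ℂ))) (𝓝[>] 0) (𝓝 A) ∧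
        A ≠ 0 ∧ B ≠ 0 ∧ A = Complex.I * B := by
  obtain ⟨hd, h4, hinf⟩ := hξ
  have hco : Tendsto (fun t : ℝ => (t : ℂ)) atTop (Bornology.cobounded ℂ) := by
    rw [← tendsto_norm_atTop_iff_cobounded]
    simpa using tendsto_abs_atTop_atTop
  have e1 : ∀ k : ℂ, 0 < k.re → ξ k = Complex.exp (LL g κ k / 4) :=
    unique_half g κ h0 hmono ξ
      (hd.continuousOn.mono fun k hk => not_mem_iGam g κ k (ne_of_gt hk))
      (fun k hk => h4 k (not_mem_iGam g κ k (ne_of_gt hk))) (hinf.comp hco)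
  have e2 : ∀ k : ℂ, 0 < k.re → ξ (-k) = Complex.exp (LL g κ k / 4) := by
    have hm : ∀ k : ℂ, 0 < k.re → -k ∈ (iGam g κ)ᶜ := fun k hk =>
      not_mem_iGam g κ (-k) (by simpa using ne_of_gt hk)
    refine unique_half g κ h0 hmono (fun k => ξ (-k))
      (hd.continuousOn.comp continuous_neg.continuousOn hm) ?_ ?_
    · intro k hk
      have := h4 (-k) (hm k hk)
      simp only [neg_sq] at this
      exact this
    · refine hinf.comp ?_
      rw [← tendsto_norm_atTop_iff_cobounded]
      simpa using tendsto_abs_atTop_atTop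
  obtain ⟨S, t1, t2⟩ := LL_tend g κ h0 hmono j hj q h1 h2
  have T1 := (Complex.continuous_exp.tendsto _).comp (t1.div_const 4)
  have T2 := (Complex.continuous_exp.tendsto _).comp (t2.div_const 4)
  refine ⟨_, _, T1.congr' ?_, T2.congr' ?_, T2.congr' ?_, T1.congr' ?_,
    Complex.exp_ne_zero _, Complex.exp_ne_zero _, ?_⟩
  · filter_upwards [self_mem_nhdsWithin] with ε hε
    exact (e1 _ (by simpa using hε)).symm
  · filter_upwards [self_mem_nhdsWithin] with ε hε
    rw [Function.comp, ← e2 _ (by simpa using hε)]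
    congr 1; ring
  · filter_upwards [self_mem_nhdsWithin] with ε hε
    exact (e1 _ (by simpa using hε)).symm
  · filter_upwards [self_mem_nhdsWithin] with ε hε
    rw [Function.comp, ← e2 _ (by simpa using hε)]
    congr 1; ring
  · have hI : Complex.exp (Real.pi / 2 * Complex.I) = Complex.I := Complex.exp_pi_div_two_mul_I
    nth_rewrite 2 [← hI]
    rw [← Complex.exp_add]
    congr 1; ring

/-- For every `p ∈ Γ` that is not an endpoint of one of the intervals
composing `Γ` (i.e. `p ≠ ±κ_j`), the one-sided boundary values
`ξ₊(ip) = lim_{ε→0⁺} ξ(ip + ε)` and `ξ₋(ip) = lim_{ε→0⁺} ξ(ip − ε)` exist and are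
nonzero (as do the corresponding limits `ξ₊(−ip)`, `ξ₋(−ip)`), and they satisfy the jump
relations `ξ₊(ip) = i sgn(p) ξ₊(−ip)` and `ξ₋(ip) = −i sgn(p) ξ₋(−ip)`. -/
theorem stmt_5 (g : ℕ) (hg : 1 ≤ g) (κ : ℕ → ℝ) (h0 : 0 < κ 1)
    (hmono : ∀ i, 1 ≤ i → i + 1 ≤ 2 * g → κ i < κ (i + 1))
    (ξ : ℂ → ℂ) (hξ : XiProp g κ ξ) :
    ∀ p ∈ Gam g κ, (∀ j, 1 ≤ j → j ≤ 2 * g → p ≠ κ j ∧ p ≠ -κ j) →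
      ∃ Lp Lm Mp Mm : ℂ,
        Tendsto (fun ε : ℝ => ξ (Complex.I * (p : ℂ) + (ε : ℂ))) (𝓝[>] 0) (𝓝 Lp) ∧
        Tendsto (fun ε : ℝ => ξ (Complex.I * (p : ℂ) - (ε : ℂ))) (𝓝[>] 0) (𝓝 Lm) ∧
        Tendsto (fun ε : ℝ => ξ (-(Complex.I * (p : ℂ)) + (ε : ℂ))) (𝓝[>] 0) (𝓝 Mp) ∧
        Tendsto (fun ε : ℝ => ξ (-(Complex.I * (p : ℂ)) - (ε : ℂ))) (𝓝[>] 0) (𝓝 Mm) ∧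
        Lp ≠ 0 ∧ Lm ≠ 0 ∧
        Lp = Complex.I * (Real.sign p : ℂ) * Mp ∧
        Lm = -Complex.I * (Real.sign p : ℂ) * Mm := by
  intro p hp hne
  simp only [Gam, Set.mem_iUnion, Finset.mem_range] at hp
  obtain ⟨j, hj, hp⟩ := hp
  have ha := kap_pos g κ h0 hmono (2 * j + 1) (by omega) (by omega)
  have n1 := hne (2 * j + 1) (by omega) (by omega)
  have n2 := hne (2 * j + 2) (by omega) (by omega)
  rcases hp with ⟨u, v⟩ | ⟨u, v⟩
  · obtain ⟨A, B, hA, hB, hB', hA', hA0, hB0, hAB⟩ := main_pos g κ h0 hmono ξ hξ j hj (-p)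
      (by have := lt_of_le_of_ne v n1.2; linarith)
      (by have := lt_of_le_of_ne u n2.2.symm; linarith)
    simp only [Complex.ofReal_neg, mul_neg, neg_neg] at hA hB hB' hA'
    refine ⟨B, A, A, B, hB', hA', hA, hB, hB0, hA0, ?_, ?_⟩
    · rw [Real.sign_of_neg (by linarith), hAB]
      push_cast
      linear_combination B * Complex.I_sq
    · rw [Real.sign_of_neg (by linarith), hAB]
      push_cast
      ring
  · obtain ⟨A, B, hA, hB, hB', hA', hA0, hB0, hAB⟩ := main_pos g κ h0 hmono ξ hξ j hj p
      (lt_of_le_of_ne u n1.1.symm) (lt_of_le_of_ne v n2.1)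
    refine ⟨A, B, B, A, hA, hB, hB', hA', hA0, hB0, ?_, ?_⟩
    · rw [Real.sign_of_pos (by linarith), hAB]
      push_cast
      ring
    · rw [Real.sign_of_pos (by linarith), hAB]
      push_cast
      linear_combination B * Complex.I_sq
end
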